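/- Let α be an irrational real number satisfying the Brjuno condition B, let δ > 0, and let φ : B_δ → ℂ be a bounded holomorphic 1-periodic function with ∫₀¹ φ(x) dx = 0. Then there exists a holomorphic 1-periodic function ψ : B_δ → ℂ such that ψ(θ+α) − ψ(θ) = φ(θ) for all θ ∈ B_δ, and such that ∫₀¹ ψ(x) dx = 0. -/

import Mathlib

noncomputable def distNearestInt (x : ℝ) : ℝ := |x - round x|

noncomputable def GammaA (α : ℝ) (N : ℕ) : ℝ :=
  sSup ((fun n : ℤ => (distNearestInt ((n : ℝ) * α))⁻¹) '' {n : ℤ | n ≠ 0 ∧ |n| ≤ (N : ℤ)})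

noncomputable def GammaAB (α β : ℝ) (N : ℕ) : ℝ :=
  sSup ((fun n : ℤ => (distNearestInt ((n : ℝ) * α - β))⁻¹) '' {n : ℤ | |n| ≤ (N : ℤ)})

def IsNonRationalPair (α β : ℝ) : Prop := ∀ k m : ℤ, (k : ℝ) * α - β ≠ (m : ℝ)

def BrjunoCond (α : ℝ) : Prop :=
  Summable (fun N : ℕ => Real.log (GammaA α (N + 1)) / ((N : ℝ) + 1) ^ 2)

def Strip (δ : ℝ) : Set ℂ := {θ : ℂ | |θ.im| < δ}

open Filter

/-! ### Small divisors and the Brjuno condition -/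

theorem distNearestInt_pos_of_irrational {α : ℝ} (hα : Irrational α) {n : ℤ} (hn : n ≠ 0) :
    0 < distNearestInt (n * α) := by
  unfold distNearestInt
  exact abs_pos.2 (sub_ne_zero.2 ((hα.intCast_mul hn).ne_int _))

theorem bddAbove_inv_distNearestInt (α : ℝ) (N : ℕ) :
    BddAbove ((fun n : ℤ => (distNearestInt ((n : ℝ) * α))⁻¹) ''
      {n : ℤ | n ≠ 0 ∧ |n| ≤ (N : ℤ)}) := by
  refine Set.Finite.bddAbove (Set.Finite.image _ ?_)
  exact (Set.finite_Icc (-(N : ℤ)) N).subset fun n hn => Set.mem_Icc.2 (abs_le.1 hn.2)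

theorem inv_distNearestInt_le_GammaA (α : ℝ) {N : ℕ} {n : ℤ} (hn : n ≠ 0) (hN : |n| ≤ (N : ℤ)) :
    (distNearestInt (n * α))⁻¹ ≤ GammaA α N :=
  le_csSup (bddAbove_inv_distNearestInt α N) ⟨n, ⟨hn, hN⟩, rfl⟩

theorem one_le_GammaA {α : ℝ} (hα : Irrational α) {N : ℕ} (hN : 1 ≤ N) : 1 ≤ GammaA α N := by
  refine le_trans ?_ (inv_distNearestInt_le_GammaA α one_ne_zero (N := N) (by simpa using hN))
  refine (one_le_inv₀ (distNearestInt_pos_of_irrational hα one_ne_zero)).2 ?_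
  exact (abs_sub_round _).trans (by norm_num)

theorem GammaA_mono (α : ℝ) {M N : ℕ} (hM : 1 ≤ M) (hMN : M ≤ N) : GammaA α M ≤ GammaA α N := by
  refine csSup_le_csSup (bddAbove_inv_distNearestInt α N) ⟨_, 1, ⟨one_ne_zero, ?_⟩, rfl⟩ ?_
  · simpa using hM
  · exact Set.image_mono fun n hn => ⟨hn.1, hn.2.trans (by exact_mod_cast hMN)⟩

/-- Under the Brjuno condition the inverse small divisors grow subexponentially. -/
theorem BrjunoCond.eventually_GammaA_le_exp {α : ℝ} (hα : Irrational α) (hB : BrjunoCond α)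
    {ε : ℝ} (hε : 0 < ε) : ∀ᶠ N : ℕ in atTop, GammaA α N ≤ Real.exp (ε * N) := by
  set u : ℕ → ℝ := fun N => Real.log (GammaA α (N + 1)) / ((N : ℝ) + 1) ^ 2 with hu
  have hS := (show Summable u from hB).hasSum.tendsto_sum_nat
  have h2 : Tendsto (fun N : ℕ => 2 * N) atTop atTop :=
    tendsto_atTop_mono (fun N => by simp; omega) tendsto_id
  have hd := (hS.comp h2).sub hS
  rw [sub_self] at hd
  filter_upwards [hd.eventually_lt_const (show 0 < ε / 4 by positivity), eventually_ge_atTop 1]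
    with N hN hN1
  have hNpos : (0 : ℝ) < N := by exact_mod_cast hN1
  have hΓ := one_le_GammaA hα hN1
  have hsum : ∑ k ∈ Finset.range (2 * N), u k - ∑ k ∈ Finset.range N, u k
      = ∑ k ∈ Finset.Ico N (2 * N), u k :=
    (Finset.sum_Ico_eq_sub _ (by omega)).symm
  have hlow : ∀ k ∈ Finset.Ico N (2 * N), Real.log (GammaA α N) / (2 * N) ^ 2 ≤ u k := by
    intro k hk
    rw [Finset.mem_Ico] at hk
    have hk2 : (k : ℝ) + 1 ≤ 2 * N := by exact_mod_cast hk.2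
    have hmono := GammaA_mono α hN1 (show N ≤ k + 1 by omega)
    have hlog := Real.log_le_log (by linarith) hmono
    have := Real.log_nonneg hΓ
    simp only [hu]
    gcongr
    linarith
  have hge := Finset.card_nsmul_le_sum _ _ _ hlow
  rw [Nat.card_Ico, show 2 * N - N = N by omega, nsmul_eq_mul] at hge
  simp only [Function.comp_apply] at hN
  rw [hsum] at hN
  have hlt : (N : ℝ) * (Real.log (GammaA α N) / (2 * N) ^ 2) < ε / 4 := hge.trans_lt hN
  have heq : (N : ℝ) * (Real.log (GammaA α N) / (2 * N) ^ 2) = Real.log (GammaA α N) / N / 4 := by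
    field_simp
    ring
  rw [heq] at hlt
  have : Real.log (GammaA α N) < ε * N := by
    rw [← div_lt_iff₀ hNpos]
    linarith
  rw [← Real.log_le_iff_le_exp (by linarith)]
  exact this.le

theorem four_mul_distNearestInt_le_norm_exp_sub_one (t : ℝ) :
    4 * distNearestInt t ≤ ‖Complex.exp (2 * Real.pi * Complex.I * t) - 1‖ := by
  set s : ℝ := t - round t with hs
  have hexp : Complex.exp (2 * Real.pi * Complex.I * t)
      = Complex.exp (Complex.I * ((2 * Real.pi * s : ℝ) : ℂ)) := by
    rw [Complex.exp_eq_exp_iff_exists_int]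
    refine ⟨round t, ?_⟩
    rw [hs]
    push_cast
    ring
  rw [hexp, Complex.norm_exp_I_mul_ofReal_sub_one, show 2 * Real.pi * s / 2 = Real.pi * s by ring,
    norm_mul, Real.norm_ofNat, Real.norm_eq_abs]
  have habs : |s| ≤ 1 / 2 := abs_sub_round t
  have hpi := Real.pi_pos
  have hsin : |Real.sin (Real.pi * s)| = Real.sin (Real.pi * |s|) := by
    rw [Real.abs_sin_eq_sin_abs_of_abs_le_pi, abs_mul, abs_of_pos hpi]
    rw [abs_mul, abs_of_pos hpi]
    nlinarith
  have hj := Real.mul_le_sin (show 0 ≤ Real.pi * |s| by positivity) (by nlinarith)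
  rw [show 2 / Real.pi * (Real.pi * |s|) = 2 * |s| by field_simp] at hj
  rw [hsin]
  change 4 * |s| ≤ _
  linarith

theorem summable_exp_neg_mul_abs_int {c : ℝ} (hc : 0 < c) :
    Summable fun n : ℤ => Real.exp (-c * |(n : ℝ)|) := by
  have h : Summable fun n : ℕ => Real.exp (-c * n) := by
    simpa only [mul_comm] using Real.summable_exp_nat_mul_iff.2 (neg_lt_zero.2 hc)
  exact Summable.of_nat_of_neg (by simpa using h) (by simpa using h)

/-! ### Fourier series of periodic functions on a strip -/

/-- The `n`-th Fourier mode `θ ↦ exp (2πinθ)`. -/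
noncomputable def fourierMode (n : ℤ) (θ : ℂ) : ℂ :=
  Complex.exp (2 * Real.pi * Complex.I * n * θ)

/-- The `n`-th Fourier coefficient of a function on the real line, computed on `[0, 1]`. -/
noncomputable def stripCoeff (f : ℂ → ℂ) (n : ℤ) : ℂ :=
  ∫ x in (0 : ℝ)..1, fourierMode (-n) x * f x

theorem fourierMode_add (n : ℤ) (θ η : ℂ) :
    fourierMode n (θ + η) = fourierMode n θ * fourierMode n η := by
  rw [fourierMode, fourierMode, fourierMode, ← Complex.exp_add]
  ring_nf

theorem fourierMode_add_one (n : ℤ) (θ : ℂ) : fourierMode n (θ + 1) = fourierMode n θ := by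
  have h : fourierMode n 1 = 1 := by
    rw [fourierMode, Complex.exp_eq_one_iff]
    exact ⟨n, by ring⟩
  rw [fourierMode_add, h, mul_one]

theorem fourierMode_neg_mul (n : ℤ) (θ : ℂ) : fourierMode (-n) θ * fourierMode n θ = 1 := by
  rw [fourierMode, fourierMode, ← Complex.exp_add]
  simp

theorem differentiable_fourierMode (n : ℤ) : Differentiable ℂ (fourierMode n) := by
  unfold fourierMode
  fun_prop

theorem norm_fourierMode (n : ℤ) (θ : ℂ) :
    ‖fourierMode n θ‖ = Real.exp (-(2 * Real.pi * n * θ.im)) := by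
  rw [fourierMode, Complex.norm_exp]
  simp

theorem norm_fourierMode_le (n : ℤ) {θ : ℂ} {r : ℝ} (h : |θ.im| ≤ r) :
    ‖fourierMode n θ‖ ≤ Real.exp (2 * Real.pi * r * |(n : ℝ)|) := by
  rw [norm_fourierMode, Real.exp_le_exp]
  have h1 : -(n * θ.im) ≤ |(n : ℝ)| * r :=
    (neg_le_abs _).trans (by rw [abs_mul]; gcongr)
  nlinarith [Real.pi_pos]

theorem integral_fourierMode {n : ℤ} (hn : n ≠ 0) :
    ∫ x in (0 : ℝ)..1, fourierMode n x = 0 := by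
  have hc : 2 * Real.pi * Complex.I * (n : ℂ) ≠ 0 := by
    simp [hn, Real.pi_ne_zero]
  have h1 : Complex.exp (2 * Real.pi * Complex.I * (n : ℂ)) = 1 := by
    rw [Complex.exp_eq_one_iff]
    exact ⟨n, by ring⟩
  simp only [fourierMode]
  rw [integral_exp_mul_complex hc]
  simp [h1]

theorem isOpen_Strip (δ : ℝ) : IsOpen (Strip δ) :=
  isOpen_lt (by fun_prop) continuous_const

theorem add_ofReal_mem_Strip {δ : ℝ} {θ : ℂ} (h : θ ∈ Strip δ) (x : ℝ) : θ + x ∈ Strip δ := by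
  simpa [Strip] using h

theorem ofReal_add_mul_I_mem_Strip {δ y : ℝ} (hy : |y| < δ) (x : ℝ) :
    (x : ℂ) + y * Complex.I ∈ Strip δ := by
  simpa [Strip] using hy

/-- Contour shift for periodic holomorphic functions on a strip. -/
theorem integral_add_mul_I_eq_of_periodic {δ : ℝ} {f : ℂ → ℂ} (hf : DifferentiableOn ℂ f (Strip δ))
    (hper : ∀ θ ∈ Strip δ, f (θ + 1) = f θ) {y : ℝ} (hy : |y| < δ) :
    ∫ x in (0 : ℝ)..1, f (x + y * Complex.I) = ∫ x in (0 : ℝ)..1, f x := by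
  have hle : ∀ t ∈ Set.uIcc 0 y, |t| < δ := fun t ht => by
    have := Set.abs_sub_left_of_mem_uIcc ht
    simp only [sub_zero] at this
    exact this.trans_lt hy
  have hrect := Complex.integral_boundary_rect_eq_zero_of_differentiableOn f 0 (1 + y * Complex.I)
    (hf.mono fun z hz => by
      have := hz.2
      simp only [Set.mem_preimage, Complex.zero_im, Complex.add_im, Complex.one_im,
        Complex.mul_im, Complex.ofReal_re, Complex.I_im, mul_one, Complex.ofReal_im,
        Complex.I_re, mul_zero, add_zero, zero_add] at this
      exact hle _ this)
  have hside : ∫ t in (0 : ℝ)..y, f (1 + t * Complex.I) = ∫ t in (0 : ℝ)..y, f (t * Complex.I) := by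
    refine intervalIntegral.integral_congr fun t ht => ?_
    have hmem : (t : ℂ) * Complex.I ∈ Strip δ := by
      simpa using ofReal_add_mul_I_mem_Strip (hle t ht) 0
    simpa [add_comm] using hper _ hmem
  simp [hside] at hrect
  exact (sub_eq_zero.1 hrect).symm

theorem integral_fourierMode_mul_shift {δ : ℝ} {f : ℂ → ℂ} (hf : DifferentiableOn ℂ f (Strip δ))
    (hper : ∀ θ ∈ Strip δ, f (θ + 1) = f θ) {y : ℝ} (hy : |y| < δ) (n : ℤ) :
    ∫ x in (0 : ℝ)..1, fourierMode (-n) x * f (x + y * Complex.I)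
      = stripCoeff f n * fourierMode n (y * Complex.I) := by
  have h := integral_add_mul_I_eq_of_periodic (f := fun θ => fourierMode (-n) θ * f θ)
    ((differentiable_fourierMode (-n)).differentiableOn.mul hf)
    (fun θ hθ => by simp only [fourierMode_add_one, hper θ hθ]) hy
  rw [stripCoeff, ← h, ← intervalIntegral.integral_mul_const]
  refine intervalIntegral.integral_congr fun x _ => ?_
  simp only [fourierMode_add]
  linear_combination (-fourierMode (-n) x * f (x + y * Complex.I)) *
    fourierMode_neg_mul n (y * Complex.I)

theorem norm_stripCoeff_le {δ C : ℝ} {f : ℂ → ℂ} (hf : DifferentiableOn ℂ f (Strip δ))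
    (hper : ∀ θ ∈ Strip δ, f (θ + 1) = f θ) (hbd : ∀ θ ∈ Strip δ, ‖f θ‖ ≤ C)
    {r : ℝ} (hr0 : 0 ≤ r) (hr : r < δ) (n : ℤ) :
    ‖stripCoeff f n‖ ≤ C * Real.exp (-(2 * Real.pi * r * |(n : ℝ)|)) := by
  have key : ∀ y : ℝ, |y| < δ → ‖stripCoeff f n‖ * Real.exp (-(2 * Real.pi * n * y)) ≤ C := by
    intro y hy
    have hn : ‖fourierMode n (y * Complex.I)‖ = Real.exp (-(2 * Real.pi * n * y)) := by
      simp [norm_fourierMode]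
    rw [← hn, ← norm_mul, ← integral_fourierMode_mul_shift hf hper hy n]
    refine (intervalIntegral.norm_integral_le_of_norm_le_const (C := C) fun x _ => ?_).trans
      (by simp)
    rw [norm_mul, norm_fourierMode]
    simpa using hbd _ (ofReal_add_mul_I_mem_Strip hy x)
  rw [Real.exp_neg, ← div_eq_mul_inv, le_div_iff₀ (Real.exp_pos _)]
  rcases le_total 0 (n : ℝ) with h | h
  · have := key (-r) (by rwa [abs_neg, abs_of_nonneg hr0])
    rw [abs_of_nonneg h]
    exact le_of_eq_of_le (by ring_nf) this
  · have := key r (by rwa [abs_of_nonneg hr0])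
    rw [abs_of_nonpos h]
    exact le_of_eq_of_le (by ring_nf) this

theorem summable_norm_stripCoeff_mul_exp {δ C : ℝ} {f : ℂ → ℂ}
    (hf : DifferentiableOn ℂ f (Strip δ))
    (hper : ∀ θ ∈ Strip δ, f (θ + 1) = f θ) (hbd : ∀ θ ∈ Strip δ, ‖f θ‖ ≤ C)
    {r : ℝ} (hr0 : 0 ≤ r) (hr : r < δ) :
    Summable fun n : ℤ => ‖stripCoeff f n‖ * Real.exp (2 * Real.pi * r * |(n : ℝ)|) := by
  obtain ⟨s, hrs, hsδ⟩ := exists_between hr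
  have hc : 0 < 2 * Real.pi * (s - r) := by
    have := Real.pi_pos
    have : 0 < s - r := by linarith
    positivity
  refine Summable.of_nonneg_of_le (fun n => by positivity) (fun n => ?_)
    ((summable_exp_neg_mul_abs_int hc).mul_left C)
  calc ‖stripCoeff f n‖ * Real.exp (2 * Real.pi * r * |(n : ℝ)|)
      ≤ C * Real.exp (-(2 * Real.pi * s * |(n : ℝ)|)) * Real.exp (2 * Real.pi * r * |(n : ℝ)|) := by
        gcongr
        exact norm_stripCoeff_le hf hper hbd (hr0.trans hrs.le) hsδ n
    _ = C * Real.exp (-(2 * Real.pi * (s - r)) * |(n : ℝ)|) := by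
        rw [mul_assoc, ← Real.exp_add]
        ring_nf

/-- A bounded periodic holomorphic function on a strip is the sum of its Fourier series. -/
theorem hasSum_stripCoeff_mul_fourierMode {δ C : ℝ} {f : ℂ → ℂ}
    (hf : DifferentiableOn ℂ f (Strip δ))
    (hper : ∀ θ ∈ Strip δ, f (θ + 1) = f θ) (hbd : ∀ θ ∈ Strip δ, ‖f θ‖ ≤ C)
    {θ : ℂ} (hθ : θ ∈ Strip δ) :
    HasSum (fun n : ℤ => stripCoeff f n * fourierMode n θ) (f θ) := by
  set y := θ.im with hy
  have hyδ : |y| < δ := hθ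
  have hgper : Function.Periodic (fun x : ℝ => f (x + y * Complex.I)) 1 := fun x => by
    have := hper _ (ofReal_add_mul_I_mem_Strip hyδ x)
    simp only [← this]
    push_cast
    ring_nf
  have hgcont : Continuous fun x : ℝ => f (x + y * Complex.I) :=
    hf.continuousOn.comp_continuous (by fun_prop) (ofReal_add_mul_I_mem_Strip hyδ)
  let g : C(UnitAddCircle, ℂ) := ⟨hgper.lift, continuous_coinduced_dom.2 hgcont⟩
  have hg : ∀ x : ℝ, g (x : UnitAddCircle) = f (x + y * Complex.I) := fun x => rfl
  have hcoeff : ∀ n, fourierCoeff g n = stripCoeff f n * fourierMode n (y * Complex.I) := by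
    intro n
    rw [fourierCoeff_eq_intervalIntegral _ n 0, ← integral_fourierMode_mul_shift hf hper hyδ n]
    simp only [fourier_coe_apply, hg, fourierMode]
    simp
  have hsum : Summable (fourierCoeff g) := by
    refine Summable.of_norm_bounded
      (summable_norm_stripCoeff_mul_exp hf hper hbd (abs_nonneg y) hyδ) fun n => ?_
    rw [hcoeff, norm_mul]
    gcongr
    exact norm_fourierMode_le n (by simp)
  have h := has_pointwise_sum_fourier_series_of_summable hsum (θ.re : UnitAddCircle)
  rw [hg, hy, Complex.re_add_im] at h
  convert h using 2 with n
  have hmode : fourier n (θ.re : UnitAddCircle) = fourierMode n θ.re := by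
    simp [fourierMode]
  rw [hcoeff, hmode, smul_eq_mul, mul_assoc, ← fourierMode_add, add_comm, hy, Complex.re_add_im]

theorem differentiableOn_tsum_mul_fourierMode {δ : ℝ} {d : ℤ → ℂ}
    (hd : ∀ r, 0 ≤ r → r < δ →
      Summable fun n : ℤ => ‖d n‖ * Real.exp (2 * Real.pi * r * |(n : ℝ)|)) :
    DifferentiableOn ℂ (fun θ => ∑' n : ℤ, d n * fourierMode n θ) (Strip δ) := by
  intro θ hθ
  obtain ⟨r, hθr, hrδ⟩ := exists_between (show |θ.im| < δ from hθ)
  have h := Complex.differentiableOn_tsum_of_summable_norm (U := Strip r)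
    (F := fun n θ => d n * fourierMode n θ) (hd r ((abs_nonneg _).trans hθr.le) hrδ)
    (fun n => ((differentiable_fourierMode n).const_mul _).differentiableOn) (isOpen_Strip r)
    (fun n w hw => by
      rw [norm_mul]
      gcongr
      exact norm_fourierMode_le n (le_of_lt hw))
  exact (h.differentiableAt ((isOpen_Strip r).mem_nhds hθr)).differentiableWithinAt

/-! ### The cohomological equation -/

/-- Fourier coefficients of the formal solution of `ψ (θ + α) - ψ θ = f θ`; the zeroth one is `0`
because its denominator vanishes. -/
noncomputable def cohomCoeff (α : ℝ) (f : ℂ → ℂ) (n : ℤ) : ℂ :=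
  stripCoeff f n / (fourierMode n α - 1)

theorem cohomCoeff_zero (α : ℝ) (f : ℂ → ℂ) : cohomCoeff α f 0 = 0 := by
  simp [cohomCoeff, fourierMode]

theorem four_mul_distNearestInt_le_norm_fourierMode_sub_one (α : ℝ) (n : ℤ) :
    4 * distNearestInt (n * α) ≤ ‖fourierMode n α - 1‖ := by
  have h := four_mul_distNearestInt_le_norm_exp_sub_one (n * α)
  rw [fourierMode]
  convert h using 4
  push_cast
  ring

theorem norm_cohomCoeff_le {α : ℝ} (hα : Irrational α) (f : ℂ → ℂ) {n : ℤ} (hn : n ≠ 0) :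
    ‖cohomCoeff α f n‖ ≤ ‖stripCoeff f n‖ * GammaA α n.natAbs := by
  have hpos := distNearestInt_pos_of_irrational hα hn
  have hle := four_mul_distNearestInt_le_norm_fourierMode_sub_one α n
  rw [cohomCoeff, norm_div, div_eq_mul_inv]
  gcongr
  refine le_trans ?_ (inv_distNearestInt_le_GammaA α hn (by simp))
  gcongr
  linarith

theorem summable_norm_cohomCoeff_mul_exp {α : ℝ} (hα : Irrational α) (hB : BrjunoCond α)
    {δ C : ℝ} {f : ℂ → ℂ} (hf : DifferentiableOn ℂ f (Strip δ))
    (hper : ∀ θ ∈ Strip δ, f (θ + 1) = f θ) (hbd : ∀ θ ∈ Strip δ, ‖f θ‖ ≤ C)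
    {r : ℝ} (hr0 : 0 ≤ r) (hr : r < δ) :
    Summable fun n : ℤ => ‖cohomCoeff α f n‖ * Real.exp (2 * Real.pi * r * |(n : ℝ)|) := by
  obtain ⟨s, hrs, hsδ⟩ := exists_between hr
  have hε : 0 < 2 * Real.pi * (s - r) := by
    have := Real.pi_pos
    have : 0 < s - r := by linarith
    positivity
  have htend : Tendsto Int.natAbs cofinite atTop := by
    refine tendsto_atTop.2 fun N => ?_
    refine (Set.finite_Icc (-(N : ℤ)) N).subset fun n hn => ?_
    simp only [Set.mem_compl_iff, Set.mem_ofPred_eq, not_le] at hn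
    exact Set.mem_Icc.2 (by omega)
  refine Summable.of_norm_bounded_eventually
    (summable_norm_stripCoeff_mul_exp hf hper hbd (hr0.trans hrs.le) hsδ) ?_
  filter_upwards [htend.eventually (hB.eventually_GammaA_le_exp hα hε),
    htend.eventually (eventually_ge_atTop 1)] with n hn hn1
  have hn0 : n ≠ 0 := by omega
  rw [Nat.cast_natAbs, Int.cast_abs] at hn
  rw [Real.norm_of_nonneg (by positivity)]
  calc ‖cohomCoeff α f n‖ * Real.exp (2 * Real.pi * r * |(n : ℝ)|)
      ≤ ‖stripCoeff f n‖ * Real.exp (2 * Real.pi * (s - r) * |(n : ℝ)|)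
          * Real.exp (2 * Real.pi * r * |(n : ℝ)|) := by
        gcongr
        exact (norm_cohomCoeff_le hα f hn0).trans (by gcongr)
    _ = ‖stripCoeff f n‖ * Real.exp (2 * Real.pi * s * |(n : ℝ)|) := by
        rw [mul_assoc, ← Real.exp_add]
        ring_nf

/-- solvability of the cohomological equation on the strip under the
Brjuno condition, with a zero-mean solution. -/
theorem stmt_3 (α : ℝ) (hα : Irrational α) (hB : BrjunoCond α) (δ : ℝ) (hδ : 0 < δ)
    (φ : ℂ → ℂ) (hφ : DifferentiableOn ℂ φ (Strip δ))
    (hper : ∀ θ ∈ Strip δ, φ (θ + 1) = φ θ)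
    (hbd : ∃ C : ℝ, ∀ θ ∈ Strip δ, ‖φ θ‖ ≤ C)
    (hmean : (∫ x in (0:ℝ)..1, φ x) = 0) :
    ∃ ψ : ℂ → ℂ, DifferentiableOn ℂ ψ (Strip δ) ∧
      (∀ θ ∈ Strip δ, ψ (θ + 1) = ψ θ) ∧
      (∀ θ ∈ Strip δ, ψ (θ + α) - ψ θ = φ θ) ∧
      (∫ x in (0:ℝ)..1, ψ x) = 0 := by
  obtain ⟨C, hC⟩ := hbd
  have hsum := fun r (hr0 : 0 ≤ r) (hr : r < δ) =>
    summable_norm_cohomCoeff_mul_exp hα hB hφ hper hC hr0 hr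
  have hconv : ∀ θ ∈ Strip δ, Summable fun n : ℤ => cohomCoeff α φ n * fourierMode n θ := by
    intro θ hθ
    refine Summable.of_norm_bounded (hsum |θ.im| (abs_nonneg _) hθ) fun n => ?_
    rw [norm_mul]
    gcongr
    exact norm_fourierMode_le n le_rfl
  refine ⟨fun θ => ∑' n : ℤ, cohomCoeff α φ n * fourierMode n θ,
    differentiableOn_tsum_mul_fourierMode hsum, fun θ _ => ?_, fun θ hθ => ?_, ?_⟩
  · simp only [fourierMode_add_one]
  · simp only
    rw [← (hconv _ (add_ofReal_mem_Strip hθ α)).tsum_sub (hconv θ hθ),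
      ← (hasSum_stripCoeff_mul_fourierMode hφ hper hC hθ).tsum_eq]
    refine tsum_congr fun n => ?_
    rcases eq_or_ne n 0 with rfl | hn
    · have h0 : stripCoeff φ 0 = 0 := by
        rw [stripCoeff, ← hmean]
        simp [fourierMode]
      simp [cohomCoeff_zero, h0]
    · have hne : fourierMode n α - 1 ≠ 0 := norm_pos_iff.1 <|
        (mul_pos four_pos (distNearestInt_pos_of_irrational hα hn)).trans_le
          (four_mul_distNearestInt_le_norm_fourierMode_sub_one α n)
      rw [fourierMode_add, cohomCoeff]
      field_simp
  · have hreal : ∀ x : ℝ, (x : ℂ) ∈ Strip δ := fun x => by simpa [Strip] using hδ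
    have hint := intervalIntegral.hasSum_integral_of_dominated_convergence
      (μ := MeasureTheory.volume) (a := 0) (b := 1)
      (F := fun (n : ℤ) (x : ℝ) => cohomCoeff α φ n * fourierMode n x)
      (f := fun x : ℝ => ∑' n : ℤ, cohomCoeff α φ n * fourierMode n x)
      (fun n _ => ‖cohomCoeff α φ n‖)
      (fun n => (Continuous.aestronglyMeasurable (continuous_const.mul
        ((differentiable_fourierMode n).continuous.comp Complex.continuous_ofReal))))
      (fun n => Eventually.of_forall fun x _ => by simp [norm_fourierMode])
      (Eventually.of_forall fun x _ => by simpa using hsum 0 le_rfl hδ)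
      intervalIntegrable_const
      (Eventually.of_forall fun x _ => (hconv x (hreal x)).hasSum)
    have hzero : ∀ n : ℤ, ∫ x in (0 : ℝ)..1, cohomCoeff α φ n * fourierMode n x = 0 := by
      intro n
      rw [intervalIntegral.integral_const_mul]
      rcases eq_or_ne n 0 with rfl | hn
      · rw [cohomCoeff_zero, zero_mul]
      · rw [integral_fourierMode hn, mul_zero]
    simp only [hzero] at hint
    exact hint.unique hasSum_zero
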